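/- Let B_r ⊂ ℝ^N be an open ball, let u : B_r → ℝ be Lebesgue integrable, and write (u)_r = (1/|B_r|)∫_{B_r} u dx for its average. Then for every L ∈ ℝ one has ∫_{B_r} G(|u − (u)_r|) dx ≤ 2^{g₀+1}·(g₀ + 1)·∫_{B_r} G(|u − L|) dx. -/

import Mathlib

open MeasureTheory

/-!
The radial extension `F v = G ‖v‖` is convex, even, and satisfies `F (2 v) ≤ K F v` with
`K = 2 ^ (g₀ + 1)`. Writing `u - (u)_r` as the midpoint of `2 (u - L)` and `2 (L - (u)_r)` gives
`F (u - (u)_r) ≤ K / 2 * (F (u - L) + F ((u)_r - L))`, and by Jensen's inequality the integral of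
the constant `F ((u)_r - L)` is at most that of `F (u - L)`. Convexity of `G` comes from `g' ≥ 0`,
and the constant `K` from the fact that `g s / s ^ g₀` is nonincreasing.
-/

section Growth

variable {g g' : ℝ → ℝ} {p : ℝ}

theorem monotoneOn_Ioi_of_hasDerivAt_nonneg {a : ℝ} (hg_diff : ∀ s, a < s → HasDerivAt g (g' s) s)
    (hg'_nonneg : ∀ s, a < s → 0 ≤ g' s) : MonotoneOn g (Set.Ioi a) := by
  refine monotoneOn_of_hasDerivWithinAt_nonneg (f' := g') (convex_Ioi a)
    (fun s hs => (hg_diff s hs).continuousAt.continuousWithinAt) ?_ ?_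
  all_goals simp only [interior_Ioi, Set.mem_Ioi]
  · exact fun s hs => (hg_diff s hs).hasDerivWithinAt
  · exact hg'_nonneg

theorem antitoneOn_mul_rpow_neg (hg_diff : ∀ s, 0 < s → HasDerivAt g (g' s) s)
    (hg'_le : ∀ s, 0 < s → s * g' s ≤ p * g s) :
    AntitoneOn (fun s => g s * s ^ (-p)) (Set.Ioi 0) := by
  have hasDerivAt_quotient (s : ℝ) (hs : 0 < s) : HasDerivAt (fun s => g s * s ^ (-p))
      (g' s * s ^ (-p) + g s * (-p * s ^ (-p - 1))) s :=
    (hg_diff s hs).mul (Real.hasDerivAt_rpow_const (Or.inl hs.ne'))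
  refine antitoneOn_of_hasDerivWithinAt_nonpos (convex_Ioi 0)
    (fun s hs => (hasDerivAt_quotient s hs).continuousAt.continuousWithinAt)
    (fun s hs => (hasDerivAt_quotient s (interior_subset hs)).hasDerivWithinAt) fun s hs => ?_
  have hs : 0 < s := interior_subset hs
  calc g' s * s ^ (-p) + g s * (-p * s ^ (-p - 1))
      = (s * g' s - p * g s) * s ^ (-p - 1) := by
        rw [Real.rpow_sub_one hs.ne']
        field_simp
        ring
    _ ≤ 0 := mul_nonpos_of_nonpos_of_nonneg (sub_nonpos.2 (hg'_le s hs)) (by positivity)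

theorem map_mul_le_rpow_mul_map (hg_diff : ∀ s, 0 < s → HasDerivAt g (g' s) s)
    (hg'_le : ∀ s, 0 < s → s * g' s ≤ p * g s) {c s : ℝ} (hc : 1 ≤ c) (hs : 0 < s) :
    g (c * s) ≤ c ^ p * g s := by
  have hc₀ : 0 < c := by linarith
  have h : g (c * s) * (c * s) ^ (-p) ≤ g s * s ^ (-p) :=
    antitoneOn_mul_rpow_neg hg_diff hg'_le hs (mul_pos hc₀ hs) (le_mul_of_one_le_left hs.le hc)
  rw [Real.mul_rpow hc₀.le hs.le, ← mul_assoc] at h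
  have h' := le_of_mul_le_mul_right h (Real.rpow_pos_of_pos hs _)
  rwa [Real.rpow_neg hc₀.le, mul_inv_le_iff₀ (by positivity), mul_comm (g s)] at h'

end Growth

section Primitive

variable {g : ℝ → ℝ} {a : ℝ}

theorem intervalIntegrable_of_monotoneOn_Ioi_of_nonneg (hg_mono : MonotoneOn g (Set.Ioi a))
    (hg_nonneg : ∀ s, a < s → 0 ≤ g s) {t : ℝ} (ht : a ≤ t) : IntervalIntegrable g volume a t := by
  rw [intervalIntegrable_iff_integrableOn_Ioc_of_le ht]
  have hg_meas : AEStronglyMeasurable g (volume.restrict (Set.Ioc a t)) :=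
    (aemeasurable_restrict_of_monotoneOn measurableSet_Ioc
      (hg_mono.mono Set.Ioc_subset_Ioi_self)).aestronglyMeasurable
  refine Integrable.of_bound hg_meas (g t) (ae_restrict_of_forall_mem measurableSet_Ioc ?_)
  intro s hs
  rw [Real.norm_of_nonneg (hg_nonneg s hs.1)]
  exact hg_mono hs.1 (hs.1.trans_le hs.2) hs.2

theorem convexOn_primitive_of_monotoneOn (hg_mono : MonotoneOn g (Set.Ioi a))
    (hg_int : ∀ t, a ≤ t → IntervalIntegrable g volume a t) :
    ConvexOn ℝ (Set.Ici a) fun t => ∫ s in a..t, g s := by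
  refine convexOn_of_slope_mono_adjacent (convex_Ici a) ?_
  intro x y z hx hz hxy hyz
  have hy : a < y := hx.trans_lt hxy
  have hxy_int := (hg_int x hx).symm.trans (hg_int y hy.le)
  have hyz_int := (hg_int y hy.le).symm.trans (hg_int z hz)
  rw [intervalIntegral.integral_interval_sub_left (hg_int y hy.le) (hg_int x hx),
    intervalIntegral.integral_interval_sub_left (hg_int z hz) (hg_int y hy.le)]
  calc (∫ s in x..y, g s) / (y - x) ≤ g y := by
        rw [div_le_iff₀ (sub_pos.2 hxy), mul_comm, ← smul_eq_mul, ← intervalIntegral.integral_const]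
        exact intervalIntegral.integral_mono_on_of_le_Ioo hxy.le hxy_int
          intervalIntegrable_const fun s hs => hg_mono (hx.trans_lt hs.1) hy hs.2.le
    _ ≤ (∫ s in y..z, g s) / (z - y) := by
        rw [le_div_iff₀ (sub_pos.2 hyz), mul_comm, ← smul_eq_mul, ← intervalIntegral.integral_const]
        exact intervalIntegral.integral_mono_on_of_le_Ioo hyz.le intervalIntegrable_const
          hyz_int fun s hs => hg_mono hy (hy.trans hs.1) hs.1.le

theorem continuousOn_Ici_primitive (hg_int : ∀ t, a ≤ t → IntervalIntegrable g volume a t) :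
    ContinuousOn (fun t => ∫ s in a..t, g s) (Set.Ici a) := by
  intro t ht
  have ht' : a ≤ t + 1 := ht.trans (by linarith)
  have h := intervalIntegral.continuousOn_primitive_interval' (hg_int _ ht') Set.left_mem_uIcc
  rw [Set.uIcc_of_le ht'] at h
  refine (h t ⟨ht, by linarith⟩).mono_of_mem_nhdsWithin ?_
  rw [← Set.Ici_inter_Iic]
  exact inter_mem_nhdsWithin _ (Iic_mem_nhds (by linarith))

theorem primitive_nonneg (hg_nonneg : ∀ s, a < s → 0 ≤ g s) {t : ℝ} (ht : a ≤ t) :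
    0 ≤ ∫ s in a..t, g s := by
  rw [intervalIntegral.integral_of_le ht]
  exact setIntegral_nonneg measurableSet_Ioc fun s hs => hg_nonneg s hs.1

theorem monotoneOn_primitive_of_nonneg (hg_nonneg : ∀ s, a < s → 0 ≤ g s)
    (hg_int : ∀ t, a ≤ t → IntervalIntegrable g volume a t) :
    MonotoneOn (fun t => ∫ s in a..t, g s) (Set.Ici a) := by
  intro x hx y hy hxy
  rw [← sub_nonneg, intervalIntegral.integral_interval_sub_left (hg_int y hy) (hg_int x hx)]
  exact primitive_nonneg (fun s hs => hg_nonneg s (lt_of_le_of_lt hx hs)) hxy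

theorem primitive_mul_le (hg_int : ∀ t, 0 ≤ t → IntervalIntegrable g volume 0 t) {c K : ℝ}
    (hc : 0 < c) (hg_mul : ∀ s, 0 < s → g (c * s) ≤ K * g s) {t : ℝ} (ht : 0 ≤ t) :
    ∫ s in 0..c * t, g s ≤ c * K * ∫ s in 0..t, g s := by
  have hg_comp : IntervalIntegrable (fun s => g (c * s)) volume 0 t := by
    simpa [hc.ne'] using (hg_int (c * t) (by positivity)).comp_mul_left (c := c)
  calc ∫ s in 0..c * t, g s = c * ∫ s in 0..t, g (c * s) := by
        rw [intervalIntegral.mul_integral_comp_mul_left, mul_zero]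
    _ ≤ c * ∫ s in 0..t, K * g s := by
        gcongr
        exact intervalIntegral.integral_mono_on_of_le_Ioo ht hg_comp
          ((hg_int t ht).const_mul K) fun s hs => hg_mul s hs.1
    _ = c * K * ∫ s in 0..t, g s := by
        rw [intervalIntegral.integral_const_mul, mul_assoc]

end Primitive

section Convexity

theorem convexOn_univ_comp_norm {V : Type*} [SeminormedAddCommGroup V] [NormedSpace ℝ V]
    {Φ : ℝ → ℝ} (hΦ_conv : ConvexOn ℝ (Set.Ici 0) Φ) (hΦ_mono : MonotoneOn Φ (Set.Ici 0)) :
    ConvexOn ℝ Set.univ fun v : V => Φ ‖v‖ := by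
  refine ⟨convex_univ, fun v _ w _ a b ha hb hab => ?_⟩
  have hle : ‖a • v + b • w‖ ≤ a • ‖v‖ + b • ‖w‖ :=
    convexOn_univ_norm.2 (Set.mem_univ v) (Set.mem_univ w) ha hb hab
  exact (hΦ_mono (norm_nonneg _) ((norm_nonneg _).trans hle) hle).trans
    (hΦ_conv.2 (norm_nonneg v) (norm_nonneg w) ha hb hab)

theorem map_sub_le_of_even_of_doubling {V : Type*} [AddCommGroup V] [Module ℝ V]
    {F : V → ℝ} (hF_conv : ConvexOn ℝ Set.univ F) (hF_even : ∀ v, F (-v) = F v) {K : ℝ}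
    (hF_doubling : ∀ v, F ((2 : ℝ) • v) ≤ K * F v) (v w z : V) :
    F (v - w) ≤ K / 2 * (F (v - z) + F (w - z)) := by
  have hmid : v - w = (2⁻¹ : ℝ) • (2 : ℝ) • (v - z) + (2⁻¹ : ℝ) • (2 : ℝ) • (z - w) := by
    simp only [inv_smul_smul₀ (two_ne_zero' ℝ), sub_add_sub_cancel]
  calc F (v - w) ≤ 2⁻¹ * F ((2 : ℝ) • (v - z)) + 2⁻¹ * F ((2 : ℝ) • (z - w)) := by
        rw [hmid]
        exact hF_conv.2 (Set.mem_univ _) (Set.mem_univ _) (by norm_num) (by norm_num) (by norm_num)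
    _ ≤ 2⁻¹ * (K * F (v - z)) + 2⁻¹ * (K * F (z - w)) := by
        gcongr <;> exact hF_doubling _
    _ = K / 2 * (F (v - z) + F (w - z)) := by
        rw [← neg_sub w z, hF_even]
        ring

end Convexity

section Average

variable {Ω E : Type*} [MeasurableSpace Ω] {μ : Measure Ω}
  [NormedAddCommGroup E] [NormedSpace ℝ E] {F : E → ℝ} {u : Ω → E}

theorem ofReal_map_average_mul_measure_univ_le [CompleteSpace E] [IsFiniteMeasure μ]
    (hF_conv : ConvexOn ℝ Set.univ F) (hF_cont : Continuous F) (hF_nonneg : ∀ v, 0 ≤ F v)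
    (hu : Integrable u μ) :
    ENNReal.ofReal (F (⨍ x, u x ∂μ)) * μ Set.univ ≤ ∫⁻ x, ENNReal.ofReal (F (u x)) ∂μ := by
  rcases eq_zero_or_neZero μ with rfl | _
  · simp
  by_cases hfin : ∫⁻ x, ENNReal.ofReal (F (u x)) ∂μ = ⊤
  · exact hfin ▸ le_top
  have hFu_nonneg : 0 ≤ᵐ[μ] F ∘ u := .of_forall fun x => hF_nonneg (u x)
  have hFu : Integrable (F ∘ u) μ :=
    (lintegral_ofReal_ne_top_iff_integrable (hF_cont.comp_aestronglyMeasurable hu.1) hFu_nonneg).1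
      hfin
  calc ENNReal.ofReal (F (⨍ x, u x ∂μ)) * μ Set.univ
      ≤ ENNReal.ofReal (⨍ x, F (u x) ∂μ) * μ Set.univ := by
        gcongr
        exact hF_conv.map_average_le hF_cont.continuousOn isClosed_univ (by simp) hu hFu
    _ = ∫⁻ x, ENNReal.ofReal (F (u x)) ∂μ := by
        have h := ofReal_average hFu hFu_nonneg
        simp only [Function.comp_apply] at h
        rw [h, ENNReal.div_mul_cancel (NeZero.ne _) (measure_ne_top μ _)]

theorem lintegral_map_sub_average_le [CompleteSpace E] [IsFiniteMeasure μ]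
    (hF_conv : ConvexOn ℝ Set.univ F) (hF_cont : Continuous F) (hF_nonneg : ∀ v, 0 ≤ F v)
    (hF_even : ∀ v, F (-v) = F v) {K : ℝ} (hF_doubling : ∀ v, F ((2 : ℝ) • v) ≤ K * F v)
    (hu : Integrable u μ) (L : E) :
    ∫⁻ x, ENNReal.ofReal (F (u x - ⨍ y, u y ∂μ)) ∂μ ≤
      ENNReal.ofReal K * ∫⁻ x, ENNReal.ofReal (F (u x - L)) ∂μ := by
  set m : E := ⨍ y, u y ∂μ
  have jensen : ENNReal.ofReal (F (m - L)) * μ Set.univ ≤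
      ∫⁻ x, ENNReal.ofReal (F (u x - L)) ∂μ :=
    ofReal_map_average_mul_measure_univ_le (F := fun v => F (v - L))
      (by simpa [Function.comp_def, sub_eq_add_neg] using hF_conv.translate_left (-L))
      (by fun_prop) (fun _ => hF_nonneg _) hu
  calc ∫⁻ x, ENNReal.ofReal (F (u x - m)) ∂μ
      ≤ ∫⁻ x, ENNReal.ofReal (K / 2) *
          (ENNReal.ofReal (F (u x - L)) + ENNReal.ofReal (F (m - L))) ∂μ := by
        refine lintegral_mono fun x => ?_
        rw [← ENNReal.ofReal_add (hF_nonneg _) (hF_nonneg _),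
          ← ENNReal.ofReal_mul' (add_nonneg (hF_nonneg _) (hF_nonneg _))]
        exact ENNReal.ofReal_le_ofReal
          (map_sub_le_of_even_of_doubling hF_conv hF_even hF_doubling (u x) m L)
    _ = ENNReal.ofReal (K / 2) *
          (∫⁻ x, ENNReal.ofReal (F (u x - L)) ∂μ + ENNReal.ofReal (F (m - L)) * μ Set.univ) := by
        rw [lintegral_const_mul' _ _ ENNReal.ofReal_ne_top,
          lintegral_add_right _ measurable_const, lintegral_const]
    _ ≤ ENNReal.ofReal (K / 2) * (2 * ∫⁻ x, ENNReal.ofReal (F (u x - L)) ∂μ) := by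
        rw [two_mul]
        gcongr
    _ = ENNReal.ofReal K * ∫⁻ x, ENNReal.ofReal (F (u x - L)) ∂μ := by
        rw [← mul_assoc, ← ENNReal.ofReal_ofNat 2, ← ENNReal.ofReal_mul' zero_le_two,
          div_mul_cancel₀ K two_ne_zero]

theorem G_average_bound_general [CompleteSpace E] [IsFiniteMeasure μ] {g g' : ℝ → ℝ} {g₀ : ℝ}
    (hg_nonneg : ∀ s, 0 < s → 0 ≤ g s) (hg_diff : ∀ s, 0 < s → HasDerivAt g (g' s) s)
    (hg'_nonneg : ∀ s, 0 < s → 0 ≤ g' s) (hg'_le : ∀ s, 0 < s → s * g' s ≤ g₀ * g s)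
    {G : ℝ → ℝ} (hG : ∀ t, 0 ≤ t → G t = ∫ s in 0..t, g s) (hu : Integrable u μ) (L : E) :
    ∫⁻ x, ENNReal.ofReal (G ‖u x - ⨍ y, u y ∂μ‖) ∂μ ≤
      ENNReal.ofReal ((2 : ℝ) ^ (g₀ + 1)) * ∫⁻ x, ENNReal.ofReal (G ‖u x - L‖) ∂μ := by
  have hg_mono := monotoneOn_Ioi_of_hasDerivAt_nonneg hg_diff hg'_nonneg
  have hg_int (t : ℝ) (ht : 0 ≤ t) : IntervalIntegrable g volume 0 t :=
    intervalIntegrable_of_monotoneOn_Ioi_of_nonneg hg_mono hg_nonneg ht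
  have hG_doubling (t : ℝ) (ht : 0 ≤ t) :
      ∫ s in 0..2 * t, g s ≤ 2 ^ (g₀ + 1) * ∫ s in 0..t, g s := by
    rw [Real.rpow_add_one two_ne_zero, mul_comm ((2 : ℝ) ^ g₀)]
    exact primitive_mul_le hg_int two_pos
      (fun s hs => map_mul_le_rpow_mul_map hg_diff hg'_le one_le_two hs) ht
  simp only [hG _ (norm_nonneg _)]
  refine lintegral_map_sub_average_le (F := fun v => ∫ s in 0..‖v‖, g s)
    (convexOn_univ_comp_norm (convexOn_primitive_of_monotoneOn hg_mono hg_int)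
      (monotoneOn_primitive_of_nonneg hg_nonneg hg_int))
    ((continuousOn_Ici_primitive hg_int).comp_continuous continuous_norm norm_nonneg)
    (fun v => primitive_nonneg hg_nonneg (norm_nonneg v)) (fun v => by rw [norm_neg])
    (fun v => ?_) hu L
  rw [norm_smul, Real.norm_two]
  exact hG_doubling _ (norm_nonneg v)

end Average

/-- Inequality (2.8): for a ball `B_r ⊂ ℝ^N`, an integrable `u` with average
`(u)_r`, and any `L ∈ ℝ`,
`∫_{B_r} G(|u − (u)_r|) ≤ 2^{g₀+1}·(g₀+1)·∫_{B_r} G(|u − L|)`. -/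
theorem G_average_bound (N : ℕ)
    (δ g₀ : ℝ) (hδ : 1 ≤ δ) (hδg₀ : δ ≤ g₀)
    (g g' : ℝ → ℝ)
    (hg_cont : ContinuousOn g (Set.Ici 0))
    (hg_zero : g 0 = 0)
    (hg_pos : ∀ s : ℝ, 0 < s → 0 < g s)
    (hg_diff : ∀ s : ℝ, 0 < s → HasDerivAt g (g' s) s)
    (hg'_cont : ContinuousOn g' (Set.Ioi 0))
    (hg_ratio : ∀ s : ℝ, 0 < s → δ ≤ s * g' s / g s ∧ s * g' s / g s ≤ g₀)
    (G : ℝ → ℝ) (hG : ∀ t : ℝ, G t = ∫ s in (0:ℝ)..t, g s)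
    (x₀ : EuclideanSpace ℝ (Fin N)) (r : ℝ) (hr : 0 < r)
    (u : EuclideanSpace ℝ (Fin N) → ℝ)
    (hu : IntegrableOn u (Metric.ball x₀ r) volume) :
    ∀ L : ℝ,
      ∫⁻ x in Metric.ball x₀ r,
          ENNReal.ofReal (G |u x - ⨍ y in Metric.ball x₀ r, u y ∂volume|)
            ∂volume ≤
        ENNReal.ofReal ((2 : ℝ) ^ (g₀ + 1) * (g₀ + 1)) *
          ∫⁻ x in Metric.ball x₀ r, ENNReal.ofReal (G |u x - L|) ∂volume := by
  have : Fact (volume (Metric.ball x₀ r) < ⊤) := ⟨measure_ball_lt_top⟩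
  have hg'_nonneg (s : ℝ) (hs : 0 < s) : 0 ≤ g' s :=
    have h := mul_nonneg ((zero_le_one.trans hδ).trans (hg_ratio s hs).1) (hg_pos s hs).le
    nonneg_of_mul_nonneg_right (div_mul_cancel₀ (s * g' s) (hg_pos s hs).ne' ▸ h) hs
  have hg'_le (s : ℝ) (hs : 0 < s) : s * g' s ≤ g₀ * g s :=
    (div_le_iff₀ (hg_pos s hs)).1 (hg_ratio s hs).2
  have hconst : (2 : ℝ) ^ (g₀ + 1) ≤ 2 ^ (g₀ + 1) * (g₀ + 1) :=
    le_mul_of_one_le_right (by positivity) (by linarith)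
  exact fun L => (G_average_bound_general (fun s hs => (hg_pos s hs).le) hg_diff hg'_nonneg hg'_le
    (fun t _ => hG t) hu L).trans (mul_le_mul_left (ENNReal.ofReal_le_ofReal hconst) _)
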